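/- arXiv:2003.14302 — 2 statements merged into one kernel-verified Lean document; each statement's English description precedes it below -/
import Mathlib

section
/- Let V be a real vector space, K, L ⊆ V two convex sets, and x ∈ K ∩ L. Then (1) F_{K∩L}(x) = F_K(x) ∩ F_L(x); (2) ri(F_K(x) ∩ F_L(x)) = ri(F_K(x)) ∩ ri(F_L(x)); (3) aff(F_K(x) ∩ F_L(x)) = aff(F_K(x)) ∩ aff(F_L(x)). -/
variable {V : Type*} [AddCommGroup V] [Module ℝ V]

/-- `E` is an extreme subset of `K`: whenever a point of `E` is written as
`(1-l)•y + l•z` with `y, z ∈ K` and `l ∈ (0,1)`, both `y` and `z` lie in `E`. -/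
def IsExtremeSubset (K E : Set V) : Prop :=
  E ⊆ K ∧ ∀ x ∈ E, ∀ y ∈ K, ∀ z ∈ K, ∀ l : ℝ, l ∈ Set.Ioo (0:ℝ) 1 →
    x = (1 - l) • y + l • z → y ∈ E ∧ z ∈ E

/-- `F` is a face of `K`: a convex extreme subset of `K`. -/
def IsFaceOf (K F : Set V) : Prop := Convex ℝ F ∧ IsExtremeSubset K F

/-- The face of `K` generated by `x`: the smallest face of `K` containing `x`
(the intersection of all faces of `K` containing `x`). -/
def genFace (K : Set V) (x : V) : Set V := ⋂₀ {F | IsFaceOf K F ∧ x ∈ F}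

/-- The relative algebraic interior of `C`: all `x ∈ C` such that for every
`y` in the affine hull of `C` there is `ε > 0` with `x ± ε(y - x) ∈ C`. -/
def riSet (C : Set V) : Set V :=
  {x | x ∈ C ∧ ∀ y ∈ affineSpan ℝ C, ∃ ε : ℝ, 0 < ε ∧
    x + ε • (y - x) ∈ C ∧ x - ε • (y - x) ∈ C}


lemma shrink {K : Set V} (hK : Convex ℝ K) {x v : V} (hx : x ∈ K) {e d : ℝ} (hd : 0 < d)
    (hde : d ≤ e) (h : x + e • v ∈ K) : x + d • v ∈ K := by
  have he : 0 < e := hd.trans_le hde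
  have h1 : 0 ≤ 1 - d / e := by
    rw [sub_nonneg, div_le_one he]; exact hde
  have := hK hx h h1 (div_pos hd he).le (by ring)
  convert this using 1
  match_scalars <;> field_simp <;> ring

def cset (K : Set V) (x : V) : Set V := {y | y ∈ K ∧ ∃ e : ℝ, 0 < e ∧ x + e • (x - y) ∈ K}

lemma cset_face {K : Set V} (hK : Convex ℝ K) {x : V} (hx : x ∈ K) : IsFaceOf K (cset K x) := by
  refine ⟨?_, fun y hy => hy.1, ?_⟩
  · rintro y ⟨hy, e, he, hye⟩ z ⟨hz, d, hd, hzd⟩ a b ha hb hab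
    refine ⟨hK hy hz ha hb hab, min e d, lt_min he hd, ?_⟩
    have h1 := shrink hK hx (lt_min he hd) (min_le_left e d) hye
    have h2 := shrink hK hx (lt_min he hd) (min_le_right e d) hzd
    have := hK h1 h2 ha hb hab
    convert this using 1
    obtain rfl : b = 1 - a := by linarith
    match_scalars <;> ring
  · have key : ∀ w ∈ cset K x, ∀ y ∈ K, ∀ z ∈ K, ∀ l : ℝ, l ∈ Set.Ioo (0:ℝ) 1 →
        w = (1 - l) • y + l • z → y ∈ cset K x := by
      rintro w ⟨hw, e, he, hwe⟩ y hy z hz l ⟨h0, h1⟩ rfl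
      have hl : 0 < 1 - l := by linarith
      have hp : 0 < 1 + e * l := by positivity
      refine ⟨hy, e * (1 - l) / (1 + e * l), by positivity, ?_⟩
      have := hK hwe hz (a := 1 / (1 + e * l)) (b := e * l / (1 + e * l)) (by positivity)
        (by positivity) (by field_simp)
      convert this using 1
      match_scalars <;> field_simp <;> ring
    intro w hw y hy z hz l hl h
    refine ⟨key w hw y hy z hz l hl h, key w hw z hz y hy (1 - l) ?_ ?_⟩
    · constructor <;> linarith [hl.1, hl.2]
    · rw [h]; module

lemma genFace_eq {K : Set V} (hK : Convex ℝ K) {x : V} (hx : x ∈ K) :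
    genFace K x = cset K x := by
  apply Set.Subset.antisymm
  · exact Set.sInter_subset_of_mem ⟨cset_face hK hx, hx, 1, one_pos, by simpa using hx⟩
  · rintro y ⟨hy, e, he, hye⟩ F ⟨hF, hxF⟩
    refine (hF.2.2 x hxF y hy _ hye (1 / (1 + e)) ⟨by positivity, ?_⟩ ?_).1
    · rw [div_lt_one] <;> linarith
    · match_scalars <;> field_simp <;> ring

lemma self_mem_genFace (K : Set V) (x : V) : x ∈ genFace K x := fun _ hF => hF.2

lemma genFace_inter {K L : Set V} (hK : Convex ℝ K) (hL : Convex ℝ L) {x : V}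
    (hx : x ∈ K ∩ L) : genFace (K ∩ L) x = genFace K x ∩ genFace L x := by
  rw [genFace_eq (hK.inter hL) hx, genFace_eq hK hx.1, genFace_eq hL hx.2]
  ext y
  constructor
  · rintro ⟨hy, e, he, h⟩
    exact ⟨⟨hy.1, e, he, h.1⟩, ⟨hy.2, e, he, h.2⟩⟩
  · rintro ⟨⟨hy, e, he, h⟩, ⟨hy', d, hd, h'⟩⟩
    exact ⟨⟨hy, hy'⟩, min e d, lt_min he hd, shrink hK hx.1 (lt_min he hd) (min_le_left _ _) h,
      shrink hL hx.2 (lt_min he hd) (min_le_right _ _) h'⟩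

def dirs (K : Set V) (hK : Convex ℝ K) (x : V) (hx : x ∈ K) : Submodule ℝ V where
  carrier := {v | ∃ e : ℝ, 0 < e ∧ x + e • v ∈ K ∧ x + e • (-v) ∈ K}
  zero_mem' := ⟨1, one_pos, by simpa using hx, by simpa using hx⟩
  add_mem' := by
    rintro v w ⟨e, he, h1, h2⟩ ⟨d, hd, h3, h4⟩
    have hm := lt_min he hd
    refine ⟨min e d / 2, by positivity, ?_, ?_⟩
    · convert hK (shrink hK hx hm (min_le_left _ _) h1) (shrink hK hx hm (min_le_right _ _) h3)
        (a := 1/2) (b := 1/2) (by norm_num) (by norm_num) (by norm_num) using 1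
      module
    · convert hK (shrink hK hx hm (min_le_left _ _) h2) (shrink hK hx hm (min_le_right _ _) h4)
        (a := 1/2) (b := 1/2) (by norm_num) (by norm_num) (by norm_num) using 1
      module
  smul_mem' := by
    rintro c v ⟨e, he, h1, h2⟩
    rcases lt_trichotomy c 0 with hc | rfl | hc
    · have hc' : 0 < -c := by linarith
      have hne : c ≠ 0 := hc.ne
      refine ⟨e / (-c), by positivity, ?_, ?_⟩
      · convert h2 using 1
        match_scalars <;> field_simp
      · convert h1 using 1
        match_scalars <;> field_simp
    · exact ⟨1, one_pos, by simpa using hx, by simpa using hx⟩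
    · refine ⟨e / c, by positivity, ?_, ?_⟩
      · convert h1 using 1
        match_scalars <;> field_simp
      · convert h2 using 1
        match_scalars <;> field_simp

lemma mem_aff {K : Set V} (hK : Convex ℝ K) {x : V} (hx : x ∈ K) (y : V) :
    y ∈ affineSpan ℝ (genFace K x) ↔
      ∃ e : ℝ, 0 < e ∧ x + e • (y - x) ∈ K ∧ x + e • (-(y - x)) ∈ K := by
  constructor
  · intro hy
    have : affineSpan ℝ (genFace K x) ≤ AffineSubspace.mk' x (dirs K hK x hx) := by
      rw [affineSpan_le]
      intro z hz
      rw [genFace_eq hK hx] at hz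
      obtain ⟨hz, e, he, h⟩ := hz
      have hm : 0 < min e 1 := lt_min he one_pos
      refine (AffineSubspace.mem_mk').2 ⟨min e 1, hm, shrink hK hx hm (min_le_right _ _) ?_,
        shrink hK hx hm (min_le_left _ _) ?_⟩
      · simpa using hz
      · simpa using h
    exact (AffineSubspace.mem_mk').1 (this hy)
  · rintro ⟨e, he, h1, h2⟩
    have hF : x + e • (y - x) ∈ genFace K x := by
      rw [genFace_eq hK hx]
      refine ⟨h1, 1, one_pos, ?_⟩
      convert h2 using 1
      module
    have := AffineMap.lineMap_mem (1 / e) (subset_affineSpan ℝ _ (self_mem_genFace K x))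
      (subset_affineSpan ℝ _ hF)
    convert this using 1
    rw [AffineMap.lineMap_apply_module]
    match_scalars <;> field_simp <;> ring

lemma genFace_mono {K : Set V} (hK : Convex ℝ K) {x y : V} (hx : x ∈ K)
    (hy : y ∈ genFace K x) : genFace K y ⊆ genFace K x := by
  rw [genFace_eq hK hx] at hy ⊢
  exact Set.sInter_subset_of_mem ⟨cset_face hK hx, hy⟩

lemma self_mem_ri {K : Set V} (hK : Convex ℝ K) {x : V} (hx : x ∈ K) :
    x ∈ riSet (genFace K x) := by
  refine ⟨self_mem_genFace K x, fun y hy => ?_⟩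
  obtain ⟨e, he, h1, h2⟩ := (mem_aff hK hx y).1 hy
  rw [genFace_eq hK hx]
  refine ⟨e, he, ⟨h1, 1, one_pos, ?_⟩, ⟨?_, 1, one_pos, ?_⟩⟩
  · convert h2 using 1
    module
  · convert h2 using 1
    module
  · convert h1 using 1
    module

lemma mem_ri {K : Set V} (hK : Convex ℝ K) {x : V} (hx : x ∈ K) (y : V) :
    y ∈ riSet (genFace K x) ↔ y ∈ genFace K x ∧ x ∈ genFace K y := by
  have hsub : genFace K x ⊆ K := by
    rw [genFace_eq hK hx]; exact fun z hz => hz.1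
  constructor
  · rintro ⟨hy, h⟩
    obtain ⟨e, he, -, h2⟩ := h x (subset_affineSpan ℝ _ (self_mem_genFace K x))
    refine ⟨hy, ?_⟩
    rw [genFace_eq hK (hsub hy)]
    refine ⟨hx, e, he, ?_⟩
    convert hsub h2 using 1
    module
  · rintro ⟨hy, h⟩
    have hyK := hsub hy
    rw [Set.Subset.antisymm (genFace_mono hK hyK h) (genFace_mono hK hx hy)]
    exact self_mem_ri hK hyK

theorem stmt8 (K L : Set V) (hK : Convex ℝ K) (hL : Convex ℝ L)
    (x : V) (hx : x ∈ K ∩ L) :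
    genFace (K ∩ L) x = genFace K x ∩ genFace L x ∧
    riSet (genFace K x ∩ genFace L x) = riSet (genFace K x) ∩ riSet (genFace L x) ∧
    (affineSpan ℝ (genFace K x ∩ genFace L x) : Set V) =
      (affineSpan ℝ (genFace K x) : Set V) ∩ (affineSpan ℝ (genFace L x) : Set V) := by
  have hKL := hK.inter hL
  have h1 := genFace_inter hK hL hx
  refine ⟨h1, ?_, ?_⟩
  · rw [← h1]
    ext y
    rw [Set.mem_inter_iff, mem_ri hKL hx, mem_ri hK hx.1, mem_ri hL hx.2, h1]
    constructor
    · rintro ⟨⟨ha, hb⟩, hc⟩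
      have hyK : y ∈ K := by
        rw [genFace_eq hK hx.1] at ha; exact ha.1
      have hyL : y ∈ L := by
        rw [genFace_eq hL hx.2] at hb; exact hb.1
      rw [genFace_inter hK hL ⟨hyK, hyL⟩] at hc
      exact ⟨⟨ha, hc.1⟩, ⟨hb, hc.2⟩⟩
    · rintro ⟨⟨ha, hc⟩, ⟨hb, hd⟩⟩
      have hyK : y ∈ K := by
        rw [genFace_eq hK hx.1] at ha; exact ha.1
      have hyL : y ∈ L := by
        rw [genFace_eq hL hx.2] at hb; exact hb.1
      rw [genFace_inter hK hL ⟨hyK, hyL⟩]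
      exact ⟨⟨ha, hb⟩, ⟨hc, hd⟩⟩
  · rw [← h1]
    ext y
    rw [Set.mem_inter_iff, SetLike.mem_coe, SetLike.mem_coe, SetLike.mem_coe,
      mem_aff hKL hx, mem_aff hK hx.1, mem_aff hL hx.2]
    constructor
    · rintro ⟨e, he, ha, hb⟩
      exact ⟨⟨e, he, ha.1, hb.1⟩, ⟨e, he, ha.2, hb.2⟩⟩
    · rintro ⟨⟨e, he, ha, hb⟩, ⟨d, hd, ha', hb'⟩⟩
      have hm := lt_min he hd
      exact ⟨min e d, hm,
        ⟨shrink hK hx.1 hm (min_le_left _ _) ha, shrink hL hx.2 hm (min_le_right _ _) ha'⟩,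
        ⟨shrink hK hx.1 hm (min_le_left _ _) hb, shrink hL hx.2 hm (min_le_right _ _) hb'⟩⟩
end

section
/- Let V be a real vector space, K ⊆ V a convex set, m, n ∈ ℕ with n > m, and ℓ ∈ ℕ with ℓ ≤ n − m. Let u = {1, …, ℓ}, and for each k ∈ u let f_k : K → ℝ ∪ {+∞} be a generalized affine map and α_k ∈ ℝ; let s ⊆ u and K_u^s = {x ∈ K : f_k(x) ≤ α_k for all k ∈ u \ s, and f_k(x) = α_k for all k ∈ s}. If K has no face of dimension belonging to {m, m+1, …, n}, then K_u^s has no face of dimension belonging to {m, m+1, …, n − ℓ}. -/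
variable {V : Type*} [AddCommGroup V] [Module ℝ V]

/-- A generalized affine map on `K` with values in `ℝ ∪ {+∞}` (modelled by
`EReal` values that are never `⊥` on `K`), affine with the extended arithmetic
`0·(+∞) = 0`, `λ·(+∞) = +∞` for `λ > 0`, `α + (+∞) = +∞`. -/
def IsGenAffine (K : Set V) (f : V → EReal) : Prop :=
  (∀ x ∈ K, f x ≠ ⊥) ∧
  ∀ x ∈ K, ∀ y ∈ K, ∀ l : ℝ, l ∈ Set.Icc (0:ℝ) 1 →
    f ((1 - l) • x + l • y) = ((1 - l : ℝ) : EReal) * f x + ((l : ℝ) : EReal) * f y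

theorem aux_seg {K : Set V} (hK : Convex ℝ K) {x v : V} (hx : x ∈ K) {e d : ℝ}
    (he : 0 < e) (h : x + e • v ∈ K) (hd : 0 ≤ d) (hde : d ≤ e) : x + d • v ∈ K := by
  have h1 : 0 ≤ d / e := by positivity
  have h2 : 0 ≤ 1 - d / e := by
    rw [sub_nonneg, div_le_one he]; exact hde
  have := hK hx h h2 h1 (by ring)
  convert this using 1
  have h3 : d = d / e * e := by field_simp
  have h4 : (d / e) • (e • v) = d • v := by rw [smul_smul, ← h3]
  rw [smul_add, h4]
  module

theorem aux_seg' {K : Set V} (hK : Convex ℝ K) {x v : V} (hx : x ∈ K) {e d : ℝ}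
    (he : 0 < e) (h : x - e • v ∈ K) (hd : 0 ≤ d) (hde : d ≤ e) : x - d • v ∈ K := by
  have := aux_seg hK (v := -v) hx he (by simpa [sub_eq_add_neg] using h) hd hde
  simpa [sub_eq_add_neg] using this

/-- Directions in which one can move both ways from `x` inside `K`. -/
def dirSub (K : Set V) (hK : Convex ℝ K) (x : V) (hx : x ∈ K) : Submodule ℝ V where
  carrier := {v | ∃ e : ℝ, 0 < e ∧ x + e • v ∈ K ∧ x - e • v ∈ K}
  zero_mem' := ⟨1, one_pos, by simpa using hx, by simpa using hx⟩
  add_mem' := by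
    rintro v w ⟨e, he, h1, h2⟩ ⟨d, hd, h3, h4⟩
    have hm : 0 < min e d := lt_min he hd
    refine ⟨min e d / 2, by positivity, ?_, ?_⟩
    · have a := aux_seg hK hx he h1 hm.le (min_le_left _ _)
      have b := aux_seg hK hx hd h3 hm.le (min_le_right _ _)
      convert hK a b (a := 1/2) (b := 1/2) (by norm_num) (by norm_num) (by norm_num) using 1
      module
    · have a := aux_seg' hK hx he h2 hm.le (min_le_left _ _)
      have b := aux_seg' hK hx hd h4 hm.le (min_le_right _ _)
      convert hK a b (a := 1/2) (b := 1/2) (by norm_num) (by norm_num) (by norm_num) using 1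
      module
  smul_mem' := by
    rintro c v ⟨e, he, h1, h2⟩
    rcases lt_trichotomy c 0 with hc | hc | hc
    · refine ⟨e / (-c), div_pos he (by linarith), ?_, ?_⟩
      · have : (e / (-c)) • c • v = -(e • v) := by
          rw [smul_smul, ← neg_smul]; congr 1; have := hc.ne; field_simp
        rw [this, ← sub_eq_add_neg]; exact h2
      · have : (e / (-c)) • c • v = -(e • v) := by
          rw [smul_smul, ← neg_smul]; congr 1; have := hc.ne; field_simp
        rw [this, sub_neg_eq_add]; exact h1
    · subst hc
      exact ⟨1, one_pos, by simpa using hx, by simpa using hx⟩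
    · have : (e / c) • c • v = e • v := by
        rw [smul_smul]; congr 1; field_simp
      exact ⟨e / c, by positivity, by rw [this]; exact h1, by rw [this]; exact h2⟩

theorem mem_dirSub {K : Set V} {hK : Convex ℝ K} {x : V} {hx : x ∈ K} {v : V} :
    v ∈ dirSub K hK x hx ↔ ∃ e : ℝ, 0 < e ∧ x + e • v ∈ K ∧ x - e • v ∈ K := Iff.rfl

theorem sub_mem_dirSub {K : Set V} {hK : Convex ℝ K} {x : V} {hx : x ∈ K} {y : V} (hy : y ∈ K)
    {d : ℝ} (hd : 0 < d) (h : x - d • (y - x) ∈ K) : y - x ∈ dirSub K hK x hx := by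
  have hm : 0 < min d 1 := lt_min hd one_pos
  exact ⟨min d 1, hm, aux_seg hK hx one_pos (by simpa using hy) hm.le (min_le_right _ _),
    aux_seg' hK hx hd h hm.le (min_le_left _ _)⟩

/-- The face generated by `x`. -/
def ptFace (K : Set V) (hK : Convex ℝ K) (x : V) (hx : x ∈ K) : Set V :=
  {y | y ∈ K ∧ y - x ∈ dirSub K hK x hx}

theorem ptFace_left {K : Set V} {hK : Convex ℝ K} {x : V} {hx : x ∈ K} {y a b : V}
    (hy : y ∈ ptFace K hK x hx) (ha : a ∈ K) (hb : b ∈ K) {p q : ℝ} (hp : 0 < p) (hq : 0 < q)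
    (hpq : p + q = 1) (h : y = p • a + q • b) : a ∈ ptFace K hK x hx := by
  obtain ⟨hyK, e, he, -, h2⟩ := hy
  refine ⟨ha, ?_⟩
  have hD : 0 < 1 + e * q := by positivity
  refine sub_mem_dirSub ha (d := e * p / (1 + e * q)) (by positivity) ?_
  have := hK h2 hb (a := 1 / (1 + e * q)) (b := e * q / (1 + e * q)) (by positivity)
    (by positivity) (by field_simp)
  convert this using 1
  obtain rfl : p = 1 - q := by linarith
  subst h
  match_scalars <;> field_simp <;> ring

theorem ptFace_isFace (K : Set V) (hK : Convex ℝ K) (x : V) (hx : x ∈ K) :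
    IsFaceOf K (ptFace K hK x hx) := by
  refine ⟨?_, fun y hy => hy.1, ?_⟩
  · intro a ha b hb p q hp hq hpq
    refine ⟨hK ha.1 hb.1 hp hq hpq, ?_⟩
    have : p • a + q • b - x = p • (a - x) + q • (b - x) := by
      obtain rfl : p = 1 - q := by linarith
      module
    rw [this]
    exact add_mem (Submodule.smul_mem _ _ ha.2) (Submodule.smul_mem _ _ hb.2)
  · intro y hy a ha b hb l hl h
    have h1 : 0 < 1 - l := by linarith [hl.2]
    exact ⟨ptFace_left hy ha hb h1 hl.1 (by ring) h,
      ptFace_left hy hb ha hl.1 h1 (by ring) (by rw [h, add_comm])⟩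

theorem mem_ptFace_of {K : Set V} {hK : Convex ℝ K} {x : V} {hx : x ∈ K} {v : V}
    (hv : v ∈ dirSub K hK x hx) {e : ℝ} (h : x + e • v ∈ K) : x + e • v ∈ ptFace K hK x hx :=
  ⟨h, by simpa using Submodule.smul_mem _ e hv⟩

theorem self_mem_ptFace {K : Set V} {hK : Convex ℝ K} {x : V} {hx : x ∈ K} :
    x ∈ ptFace K hK x hx := ⟨hx, by simp⟩

theorem vectorSpan_ptFace (K : Set V) (hK : Convex ℝ K) (x : V) (hx : x ∈ K) :
    vectorSpan ℝ (ptFace K hK x hx) = dirSub K hK x hx := by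
  apply le_antisymm
  · rw [vectorSpan_def, Submodule.span_le]
    rintro _ ⟨a, ha, b, hb, rfl⟩
    have := sub_mem ha.2 hb.2
    simpa using this
  · intro v hv
    obtain ⟨e, he, h1, -⟩ := id hv
    have := vsub_mem_vectorSpan ℝ (mem_ptFace_of hv h1) (self_mem_ptFace (hK := hK) (hx := hx))
    have h3 := Submodule.smul_mem _ (e⁻¹) this
    simpa [smul_smul, he.ne'] using h3

theorem exists_ri {F : Set V} (hF : Convex ℝ F) (hne : F.Nonempty)
    (hfin : Module.Finite ℝ (vectorSpan ℝ F)) :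
    ∃ x, ∃ hx : x ∈ F, vectorSpan ℝ F ≤ dirSub F hF x hx := by
  classical
  obtain ⟨t, htF, hspan, hind⟩ := exists_affineIndependent ℝ V F
  have hvs : vectorSpan ℝ t = vectorSpan ℝ F := by
    rw [← direction_affineSpan, hspan, direction_affineSpan]
  have htne : t.Nonempty := by
    rw [← affineSpan_nonempty ℝ, hspan, affineSpan_nonempty]; exact hne
  have htfin : t.Finite := by
    obtain ⟨p, hp⟩ := htne
    rw [affineIndependent_iff_linearIndependent_vsub ℝ _ (⟨p, hp⟩ : t)] at hind
    have hli : LinearIndependent ℝ (fun i : {i : t // i ≠ ⟨p, hp⟩} =>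
        (⟨(i : V) -ᵥ p, vsub_mem_vectorSpan ℝ (htF i.1.2) (htF hp)⟩ : vectorSpan ℝ F)) :=
      LinearIndependent.of_comp (vectorSpan ℝ F).subtype hind
    have hf := hli.finite_of_isNoetherian
    have : Finite t := Set.finite_univ_iff.1 (by
      have h := (Set.finite_singleton (⟨p, hp⟩ : t)).finite_of_compl (Set.finite_coe_iff.1 hf)
      exact Set.finite_univ_iff.2 h)
    exact Set.toFinite t
  obtain ⟨T, rfl⟩ := htfin.exists_finset_coe
  have hTne : T.Nonempty := by simpa using htne
  have hN : (0 : ℝ) < T.card := by exact_mod_cast hTne.card_pos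
  set N : ℝ := (T.card : ℝ) with hNdef
  have hx : ∑ i ∈ T, (1 / N) • i ∈ F := by
    refine hF.sum_mem (fun i _ => by positivity) ?_ (fun i hi => htF hi)
    rw [Finset.sum_const, nsmul_eq_mul, ← hNdef]; field_simp
  refine ⟨_, hx, ?_⟩
  have key : ∀ p ∈ T, p - ∑ i ∈ T, (1 / N) • i ∈ dirSub F hF _ hx := by
    intro p hp
    refine sub_mem_dirSub (htF hp) (d := 1 / N) (by positivity) ?_
    have hs : ∑ i ∈ T, (1 / N + (1 / N) * (1 / N) - if i = p then 1 / N else 0) • i ∈ F := by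
      refine hF.sum_mem ?_ ?_ (fun i hi => htF hi)
      · intro i _
        split_ifs
        · have : 0 ≤ (1 / N) * (1 / N) := by positivity
          linarith
        · have : 0 ≤ (1 / N) * (1 / N) := by positivity
          have : 0 ≤ (1 / N) := by positivity
          linarith
      · rw [Finset.sum_sub_distrib, Finset.sum_const, nsmul_eq_mul, ← hNdef,
          Finset.sum_ite_eq' T p, if_pos hp]
        field_simp; ring
    convert hs using 1
    simp only [sub_smul, add_smul, Finset.sum_sub_distrib, Finset.sum_add_distrib, ite_smul,
      zero_smul, Finset.sum_ite_eq', if_pos hp, mul_smul, ← Finset.smul_sum]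
    module
  rw [← hvs, vectorSpan_def, Submodule.span_le]
  rintro _ ⟨a, ha, b, hb, rfl⟩
  have := sub_mem (key a ha) (key b hb)
  simpa using this

theorem exists_lin {K : Set V} {hK : Convex ℝ K} {x : V} {hx : x ∈ K} (g : V → ℝ)
    (hg : ∀ a ∈ ptFace K hK x hx, ∀ b ∈ ptFace K hK x hx, ∀ l : ℝ, l ∈ Set.Icc (0:ℝ) 1 →
      g ((1 - l) • a + l • b) = (1 - l) * g a + l * g b) :
    ∃ φ : dirSub K hK x hx →ₗ[ℝ] ℝ, ∀ v : dirSub K hK x hx, ∀ e : ℝ, 0 < e →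
      x + e • (v : V) ∈ K → g (x + e • (v : V)) = g x + e * φ v := by
  have scale : ∀ v ∈ dirSub K hK x hx, ∀ e d : ℝ, 0 < d → 0 ≤ e → e ≤ d → x + d • v ∈ K →
      g (x + e • v) = g x + e / d * (g (x + d • v) - g x) := by
    intro v hv e d hd he hed h
    have := hg x self_mem_ptFace _ (mem_ptFace_of hv h) (e / d)
      ⟨by positivity, by rwa [div_le_one hd]⟩
    have h2 : (1 - e / d) • x + (e / d) • (x + d • v) = x + e • v := by
      match_scalars <;> field_simp <;> ring
    rw [h2] at this
    rw [this]; ring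
  have hch : ∀ v : dirSub K hK x hx, ∃ r : ℝ, ∀ e : ℝ, 0 < e →
      x + e • (v : V) ∈ K → g (x + e • (v : V)) = g x + e * r := by
    rintro ⟨v, hv⟩
    obtain ⟨d, hd, h1, -⟩ := id hv
    refine ⟨(g (x + d • v) - g x) / d, fun e he h => ?_⟩
    rcases le_total e d with hed | hed
    · rw [scale v hv e d hd he.le hed h1]; ring
    · have := scale v hv d e he hd.le hed h
      simp only [this]
      field_simp; ring
  choose r hr using hch
  have uniq : ∀ (v : dirSub K hK x hx) (c : ℝ) (e : ℝ), 0 < e → x + e • (v : V) ∈ K →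
      g (x + e • (v : V)) = g x + e * c → r v = c := by
    intro v c e he h h2
    have := hr v e he h
    have h3 : e * r v = e * c := by linarith
    exact mul_left_cancel₀ he.ne' h3
  have hadd : ∀ v w, r (v + w) = r v + r w := by
    intro v w
    obtain ⟨e, he, h1, -⟩ := id v.2
    obtain ⟨d, hd, h2, -⟩ := id w.2
    have hm : 0 < min e d := lt_min he hd
    have a := aux_seg hK hx he h1 hm.le (min_le_left _ _)
    have b := aux_seg hK hx hd h2 hm.le (min_le_right _ _)
    have h3 : (1 - (1/2 : ℝ)) • (x + min e d • (v : V)) + (1/2 : ℝ) • (x + min e d • (w : V))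
        = x + (min e d / 2) • ((v + w : dirSub K hK x hx) : V) := by
      rw [Submodule.coe_add]; module
    refine uniq _ _ (min e d / 2) (by positivity) ?_ ?_
    · rw [← h3]; exact hK a b (by norm_num) (by norm_num) (by norm_num)
    · rw [← h3, hg _ (mem_ptFace_of v.2 a) _ (mem_ptFace_of w.2 b) _ (by norm_num),
        hr v _ hm a, hr w _ hm b]
      ring
  have h0 : r 0 = 0 := by
    have := hadd 0 0
    simp only [add_zero] at this
    linarith
  have hneg : ∀ v, r (-v) = - r v := by
    intro v
    have := hadd v (-v)
    rw [add_neg_cancel, h0] at this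
    linarith
  have hpos : ∀ (c : ℝ) v, 0 < c → r (c • v) = c * r v := by
    intro c v hc
    obtain ⟨e, he, h1, -⟩ := id v.2
    have h2 : (e / c) • ((c • v : dirSub K hK x hx) : V) = e • (v : V) := by
      rw [Submodule.coe_smul, smul_smul]; congr 1; field_simp
    refine uniq _ _ (e / c) (by positivity) (by rw [h2]; exact h1) ?_
    rw [h2, hr v e he h1]; field_simp
  refine ⟨{ toFun := r, map_add' := hadd, map_smul' := ?_ }, hr⟩
  intro c v
  simp only [RingHom.id_apply, smul_eq_mul]
  rcases lt_trichotomy c 0 with hc | hc | hc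
  · have := hpos (-c) v (by linarith)
    rw [neg_smul, hneg] at this
    linarith
  · subst hc; simp [h0]
  · exact hpos c v hc

theorem genAffine_ne_top {K : Set V} {hK : Convex ℝ K} {x : V} {hx : x ∈ K} {f : V → EReal}
    (hf : IsGenAffine K f) (hfx : f x ≠ ⊤) {y : V} (hy : y ∈ ptFace K hK x hx) : f y ≠ ⊤ := by
  intro htop
  obtain ⟨hyK, e, he, -, h2⟩ := hy
  have hl : e / (1 + e) ∈ Set.Icc (0:ℝ) 1 :=
    ⟨by positivity, by rw [div_le_one (by positivity)]; linarith⟩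
  have h := hf.2 _ h2 y hyK (e / (1 + e)) hl
  have hxx : (1 - e / (1 + e)) • (x - e • (y - x)) + (e / (1 + e)) • y = x := by
    match_scalars <;> field_simp <;> ring
  rw [hxx, htop, EReal.coe_mul_top_of_pos (by positivity)] at h
  apply hfx
  rw [h]
  apply EReal.add_top_of_ne_bot
  have hb := hf.1 _ h2
  have hc : 0 < 1 - e / (1 + e) := by
    have : 1 - e / (1 + e) = 1 / (1 + e) := by field_simp; ring
    rw [this]; positivity
  induction h : f (x - e • (y - x)) with
  | bot => exact absurd h hb
  | coe r => rw [← EReal.coe_mul]; exact EReal.coe_ne_bot _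
  | top => rw [EReal.coe_mul_top_of_pos hc]; simp

theorem stmt13 (K : Set V) (hK : Convex ℝ K) (m n ℓ : ℕ) (hmn : m < n)
    (hℓ : ℓ + m ≤ n)
    (f : Fin ℓ → V → EReal) (hf : ∀ k, IsGenAffine K (f k))
    (α : Fin ℓ → ℝ) (s : Set (Fin ℓ))
    (hKfaces : ∀ F : Set V, IsFaceOf K F → ∀ d : ℕ, m ≤ d → d ≤ n →
      Module.rank ℝ ↥(vectorSpan ℝ F) ≠ (d : Cardinal)) :
    ∀ F : Set V,
      IsFaceOf {y ∈ K | (∀ k ∉ s, f k y ≤ (α k : EReal)) ∧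
                        (∀ k ∈ s, f k y = (α k : EReal))} F →
      ∀ d : ℕ, m ≤ d → d + ℓ ≤ n →
        Module.rank ℝ ↥(vectorSpan ℝ F) ≠ (d : Cardinal) := by
  intro F hF d hmd hdn hrank
  rcases F.eq_empty_or_nonempty with hFe | hne
  · refine hKfaces ∅ ⟨convex_empty, Set.empty_subset _, by simp⟩ d hmd (by omega) ?_
    rw [← hFe]; exact hrank
  have hfin : Module.Finite ℝ (vectorSpan ℝ F) := by
    rw [← Module.rank_lt_aleph0_iff, hrank]; exact Cardinal.natCast_lt_aleph0
  obtain ⟨x, hxF, hri⟩ := exists_ri hF.1 hne hfin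
  have hFK : F ⊆ K := fun y hy => (hF.2.1 hy).1
  have hx : x ∈ K := hFK hxF
  have hFD : vectorSpan ℝ F ≤ dirSub K hK x hx := by
    intro v hv
    obtain ⟨e, he, h1, h2⟩ := hri hv
    exact ⟨e, he, hFK h1, hFK h2⟩
  have hxL := hF.2.1 hxF
  have hle : ∀ k, f k x ≤ (α k : EReal) := by
    intro k
    by_cases hk : k ∈ s
    · exact (hxL.2.2 k hk).le
    · exact hxL.2.1 k hk
  have hxtop : ∀ k, f k x ≠ ⊤ := fun k => ((hle k).trans_lt (EReal.coe_lt_top _)).ne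
  have hcoe : ∀ k, ∀ y ∈ ptFace K hK x hx, f k y = ((f k y).toReal : EReal) := by
    intro k y hy
    exact (EReal.coe_toReal (genAffine_ne_top (hf k) (hxtop k) hy) ((hf k).1 y hy.1)).symm
  have hlin : ∀ k, ∃ φ : dirSub K hK x hx →ₗ[ℝ] ℝ, ∀ v : dirSub K hK x hx, ∀ e : ℝ, 0 < e →
      x + e • (v : V) ∈ K → (f k (x + e • (v : V))).toReal = (f k x).toReal + e * φ v := by
    intro k
    refine exists_lin (fun y => (f k y).toReal) ?_
    intro a ha b hb l hl
    have h := (hf k).2 a ha.1 b hb.1 l hl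
    rw [hcoe k a ha, hcoe k b hb, ← EReal.coe_mul, ← EReal.coe_mul, ← EReal.coe_add] at h
    simp only [h, EReal.toReal_coe]
  choose φ hφ using hlin
  let Φ : dirSub K hK x hx →ₗ[ℝ] (Fin ℓ → ℝ) := LinearMap.pi φ
  have hker : (LinearMap.ker Φ).map (dirSub K hK x hx).subtype ≤ vectorSpan ℝ F := by
    rintro _ ⟨v, hv, rfl⟩
    have hv0 : ∀ k, φ k v = 0 := fun k => congrFun (LinearMap.mem_ker.1 hv) k
    obtain ⟨e, he, h1, h2⟩ := id v.2
    have heq : ∀ w : dirSub K hK x hx, (∀ k, φ k w = 0) → x + e • (w : V) ∈ K →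
        x + e • (w : V) ∈ {y ∈ K | (∀ k ∉ s, f k y ≤ (α k : EReal)) ∧
                        (∀ k ∈ s, f k y = (α k : EReal))} := by
      intro w hw hwK
      have hfe : ∀ k, f k (x + e • (w : V)) = f k x := by
        intro k
        rw [hcoe k _ (mem_ptFace_of w.2 hwK), hcoe k x self_mem_ptFace, hφ k w e he hwK, hw k]
        simp
      refine ⟨hwK, fun k hk => ?_, fun k hk => ?_⟩
      · rw [hfe]; exact hxL.2.1 k hk
      · rw [hfe]; exact hxL.2.2 k hk
    have hA := heq v hv0 h1
    have hB := heq (-v) (fun k => by rw [map_neg, hv0, neg_zero])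
      (by simpa [sub_eq_add_neg] using h2)
    have hmem := (hF.2.2 x hxF _ hA _ hB (1/2) (by norm_num) (by
      rw [Submodule.coe_neg]; module)).1
    have h3 := Submodule.smul_mem _ (e⁻¹) (vsub_mem_vectorSpan ℝ hmem hxF)
    simpa [smul_smul, he.ne'] using h3
  have hupper : Module.rank ℝ (dirSub K hK x hx) ≤ ((ℓ + d : ℕ) : Cardinal) := by
    rw [← Submodule.rank_quotient_add_rank (LinearMap.ker Φ), Nat.cast_add]
    refine add_le_add ?_ ?_
    · have eqv := Φ.quotKerEquivRange
      have : Module.Finite ℝ (dirSub K hK x hx ⧸ LinearMap.ker Φ) := Module.Finite.equiv eqv.symm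
      rw [← Module.finrank_eq_rank, eqv.finrank_eq]
      have h := Submodule.finrank_le (LinearMap.range Φ)
      rw [Module.finrank_fin_fun] at h
      exact_mod_cast h
    · rw [← hrank]
      refine le_trans ?_ (Submodule.rank_mono hker)
      exact (Submodule.equivMapOfInjective _ (Submodule.injective_subtype _) _).rank_eq.le
  obtain ⟨D, hD⟩ := Cardinal.lt_aleph0.1 (hupper.trans_lt Cardinal.natCast_lt_aleph0)
  have hlower := Submodule.rank_mono hFD
  rw [hrank, hD] at hlower
  rw [hD] at hupper
  have hl' : d ≤ D := by exact_mod_cast hlower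
  have hu' : D ≤ ℓ + d := by exact_mod_cast hupper
  refine hKfaces _ (ptFace_isFace K hK x hx) D (by omega) (by omega) ?_
  rw [vectorSpan_ptFace, hD]
end
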